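/- Let F be a bounded complex of free S-modules, let t be an indeterminate, and S_i = S[t]/(t^i). Then ⟨t^i⟩·H^{i+1}(End^•_{S_{i+1}}(F ⊗_S S_{i+1})) is isomorphic as an S-module to H^{i+1}(End^•_S(F)). In particular, since S_{i+1} is free over S and the ideal (t^i)/(t^{i+1}) ⊂ S_{i+1} is free of rank one over S, tensoring commutes with cohomology of the endomorphism complex. -/

import Mathlib

open Polynomial TensorProduct

section EndComplex

variable (R : Type*) [CommRing R] {M : Type*} [AddCommGroup M] [Module R M]

/-- The degree-`j` piece `End^j(F)` of the endomorphism complex of a complex `F`, realized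
internally: the graded module is `M = ⊕ₙ G n` and `End^j` consists of the endomorphisms
lowering the grading index by `j`. -/
def endE (G : ℤ → Submodule R M) (j : ℤ) : Submodule R (Module.End R M) where
  carrier := {φ | ∀ n, ∀ x ∈ G n, φ x ∈ G (n - j)}
  add_mem' := fun hφ hψ n x hx => by
    simpa using add_mem (hφ n x hx) (hψ n x hx)
  zero_mem' := fun n x hx => by
    simp
  smul_mem' := fun c φ hφ n x hx => by
    simpa using Submodule.smul_mem _ c (hφ n x hx)

/-- The differential of the endomorphism complex in degree `j`:
`φ ↦ d ∘ φ - (-1)^j φ ∘ d`. -/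
noncomputable def endD (d : Module.End R M) (j : ℤ) :
    Module.End R (Module.End R M) :=
  LinearMap.mulLeft R d - (Int.negOnePow j : ℤ) • LinearMap.mulRight R d

/-- Cocycles of the endomorphism complex in degree `j`. -/
noncomputable def endZ (G : ℤ → Submodule R M) (d : Module.End R M) (j : ℤ) :
    Submodule R (Module.End R M) :=
  endE R G j ⊓ LinearMap.ker (endD R d j)

/-- Coboundaries of the endomorphism complex in degree `j`. -/
noncomputable def endB (G : ℤ → Submodule R M) (d : Module.End R M) (j : ℤ) :
    Submodule R (Module.End R M) :=
  (endE R G (j - 1)).map (endD R d (j - 1))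

/-- Degree-`j` cohomology of the endomorphism complex. -/
noncomputable abbrev endCoh (G : ℤ → Submodule R M) (d : Module.End R M) (j : ℤ) :
    Type _ :=
  endZ R G d j ⧸ (endB R G d j).comap (endZ R G d j).subtype

end EndComplex

section Contraction

variable {S : Type*} [CommRing S] {M : Type*} [AddCommGroup M] [Module S M]
  {A : Type*} [CommRing A] [Algebra S A]

/-- Contraction of the scalars of `A ⊗ M` along a linear form `f` on `A`. -/
noncomputable def scalarContract (f : A →ₗ[S] S) : A ⊗[S] M →ₗ[S] M :=
  (TensorProduct.lid S M).toLinearMap ∘ₗ f.rTensor M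

@[simp]
lemma scalarContract_tmul (f : A →ₗ[S] S) (a : A) (m : M) :
    scalarContract f (a ⊗ₜ[S] m) = f a • m := by
  simp [scalarContract]

lemma scalarContract_baseChange (f : A →ₗ[S] S) (d : Module.End S M) (x : A ⊗[S] M) :
    scalarContract f (d.baseChange A x) = d (scalarContract f x) := by
  induction x with
  | zero => simp
  | tmul a m => simp
  | add x y hx hy => simp [hx, hy]

lemma scalarContract_mem (f : A →ₗ[S] S) {N : Submodule S M} {x : A ⊗[S] M}
    (hx : x ∈ N.baseChange A) : scalarContract f x ∈ N := by
  obtain ⟨y, rfl⟩ := hx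
  induction y with
  | zero => simp
  | tmul a n => simpa using N.smul_mem _ n.2
  | add x y hx hy => simpa using add_mem hx hy

/-- The `S`-linear endomorphism of `M` obtained from an `A`-linear endomorphism of `A ⊗ M` by
restricting to `1 ⊗ M` and contracting along a linear form on `A`. -/
noncomputable def endContract (f : A →ₗ[S] S) (ψ : Module.End A (A ⊗[S] M)) : Module.End S M :=
  scalarContract f ∘ₗ ψ.restrictScalars S ∘ₗ TensorProduct.mk S A M 1

lemma endContract_apply (f : A →ₗ[S] S) (ψ : Module.End A (A ⊗[S] M)) (m : M) :
    endContract f ψ m = scalarContract f (ψ (1 ⊗ₜ m)) := rfl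

lemma endContract_smul_baseChange (f : A →ₗ[S] S) (a : A) (φ : Module.End S M) :
    endContract f (a • φ.baseChange A) = f a • φ := by
  ext m
  simp [endContract_apply, TensorProduct.smul_tmul']

lemma endContract_mem_endE (f : A →ₗ[S] S) {G : ℤ → Submodule S M} {j : ℤ}
    {ψ : Module.End A (A ⊗[S] M)} (hψ : ψ ∈ endE A (fun n => (G n).baseChange A) j) :
    endContract f ψ ∈ endE S G j := fun n _ hx =>
  scalarContract_mem f (hψ n _ (Submodule.tmul_mem_baseChange_of_mem 1 hx))

lemma endD_apply {R N : Type*} [CommRing R] [AddCommGroup N] [Module R N]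
    (d : Module.End R N) (j : ℤ) (φ : Module.End R N) (x : N) :
    endD R d j φ x = d (φ x) - (Int.negOnePow j : ℤ) • φ (d x) := rfl

lemma endD_endContract (f : A →ₗ[S] S) (d : Module.End S M) (j : ℤ)
    (ψ : Module.End A (A ⊗[S] M)) :
    endD S d j (endContract f ψ) = endContract f (endD A (d.baseChange A) j ψ) := by
  ext m
  simp only [endD_apply, endContract_apply, map_sub, map_zsmul, scalarContract_baseChange,
    LinearMap.baseChange_tmul]

lemma baseChange_mem_endE {G : ℤ → Submodule S M} {j : ℤ} {φ : Module.End S M}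
    (hφ : φ ∈ endE S G j) : φ.baseChange A ∈ endE A (fun n => (G n).baseChange A) j := by
  intro n x hx
  obtain ⟨y, rfl⟩ := hx
  induction y with
  | zero => simp
  | tmul a m => simpa using Submodule.tmul_mem_baseChange_of_mem a (hφ n m m.2)
  | add x y hx hy => simpa using add_mem hx hy

lemma endD_baseChange (d : Module.End S M) (j : ℤ) (φ : Module.End S M) :
    endD A (d.baseChange A) j (φ.baseChange A) = (endD S d j φ).baseChange A := by
  ext m
  simp [endD_apply, TensorProduct.tmul_sub]

lemma baseChange_mem_endZ {G : ℤ → Submodule S M} {d : Module.End S M} {j : ℤ}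
    {φ : Module.End S M} (hφ : φ ∈ endZ S G d j) :
    φ.baseChange A ∈ endZ A (fun n => (G n).baseChange A) (d.baseChange A) j := by
  refine ⟨baseChange_mem_endE hφ.1, ?_⟩
  rw [SetLike.mem_coe, LinearMap.mem_ker, endD_baseChange, LinearMap.mem_ker.1 hφ.2, LinearMap.baseChange_zero]

lemma baseChange_mem_endB {G : ℤ → Submodule S M} {d : Module.End S M} {j : ℤ}
    {φ : Module.End S M} (hφ : φ ∈ endB S G d j) :
    φ.baseChange A ∈ endB A (fun n => (G n).baseChange A) (d.baseChange A) j := by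
  obtain ⟨χ, hχ, rfl⟩ := hφ
  exact ⟨χ.baseChange A, baseChange_mem_endE hχ, endD_baseChange d _ χ⟩

lemma endContract_mem_endZ (f : A →ₗ[S] S) {G : ℤ → Submodule S M} {d : Module.End S M} {j : ℤ}
    {ψ : Module.End A (A ⊗[S] M)}
    (hψ : ψ ∈ endZ A (fun n => (G n).baseChange A) (d.baseChange A) j) :
    endContract f ψ ∈ endZ S G d j := by
  refine ⟨endContract_mem_endE f hψ.1, ?_⟩
  rw [SetLike.mem_coe, LinearMap.mem_ker, endD_endContract, LinearMap.mem_ker.1 hψ.2]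
  ext m
  simp [endContract_apply]

lemma endContract_mem_endB (f : A →ₗ[S] S) {G : ℤ → Submodule S M} {d : Module.End S M} {j : ℤ}
    {ψ : Module.End A (A ⊗[S] M)}
    (hψ : ψ ∈ endB A (fun n => (G n).baseChange A) (d.baseChange A) j) :
    endContract f ψ ∈ endB S G d j := by
  obtain ⟨χ, hχ, rfl⟩ := hψ
  exact ⟨endContract f χ, endContract_mem_endE f hχ, endD_endContract f d _ χ⟩

lemma smul_baseChange_endContract {f : A →ₗ[S] S} {τ : A} (hf : ∀ a, τ * a = f a • τ)
    (ψ : Module.End A (A ⊗[S] M)) : τ • (endContract f ψ).baseChange A = τ • ψ := by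
  have key (x : A ⊗[S] M) : τ ⊗ₜ[S] scalarContract f x = τ • x := by
    induction x with
    | zero => simp
    | tmul a m => rw [scalarContract_tmul, ← TensorProduct.smul_tmul, ← hf,
        TensorProduct.smul_tmul', smul_eq_mul]
    | add x y hx hy => rw [map_add, TensorProduct.tmul_add, hx, hy, smul_add]
  ext m
  simpa [TensorProduct.smul_tmul', endContract_apply] using key (ψ (1 ⊗ₜ m))

/-- If a semilinear map `T : P → Q` is surjective up to `τ`-torsion and `τ • T` pulls a submodule
`L` of `Q` back to `K`, then it identifies `P ⧸ K` with `τ • (Q ⧸ L)`. -/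
lemma nonempty_span_smul_quotient_equiv {P Q : Type*} [AddCommGroup P] [Module S P]
    [AddCommGroup Q] [Module A Q] (T : P →ₛₗ[algebraMap S A] Q) (K : Submodule S P)
    (L : Submodule A Q) (τ : A) (hT : ∀ y, ∃ x, τ • T x = τ • y)
    (hK : ∀ x, τ • T x ∈ L ↔ x ∈ K) :
    Nonempty (RestrictScalars S A ↥(Ideal.span {τ} • (⊤ : Submodule A (Q ⧸ L)))
      ≃ₗ[S] P ⧸ K) := by
  have hmem (y : Q ⧸ L) : τ • y ∈ Ideal.span {τ} • (⊤ : Submodule A (Q ⧸ L)) :=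
    Submodule.smul_mem_smul (Ideal.mem_span_singleton_self τ) trivial
  let U : P →ₛₗ[algebraMap S A] ↥(Ideal.span {τ} • (⊤ : Submodule A (Q ⧸ L))) :=
    ((τ • L.mkQ).codRestrict _ fun y => hmem (L.mkQ y)).comp T
  have hU (x : P) : U x = 0 ↔ x ∈ K := by
    rw [← hK, ← Submodule.Quotient.mk_eq_zero L]
    exact Subtype.ext_iff
  let V := K.liftQ U fun x hx => (hU x).2 hx
  have hV : Function.Bijective V := by
    constructor
    · rw [← LinearMap.ker_eq_bot]
      exact Submodule.ker_liftQ_eq_bot _ _ _ fun x hx => (hU x).1 hx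
    · rintro ⟨z, hz⟩
      have hz' := hz
      rw [Submodule.ideal_span_singleton_smul, Submodule.mem_smul_pointwise_iff_exists] at hz'
      obtain ⟨z, -, rfl⟩ := hz'
      obtain ⟨y, rfl⟩ := L.mkQ_surjective z
      obtain ⟨x, hx⟩ := hT y
      exact ⟨Submodule.Quotient.mk x, Subtype.ext (congrArg L.mkQ hx)⟩
  let e : (P ⧸ K) ≃ₗ[S]
      RestrictScalars S A ↥(Ideal.span {τ} • (⊤ : Submodule A (Q ⧸ L))) :=
    { Equiv.ofBijective V hV with
      map_add' := V.map_add
      map_smul' := V.map_smulₛₗ }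
  exact ⟨e.symm⟩

/-- A map of endomorphisms that is semilinear, preserves cocycles and, up to multiplication by `τ`,
is surjective on cocycles and reflects coboundaries, identifies the cohomology of the source with
`τ` times the cohomology of the target. -/
lemma nonempty_span_smul_endCoh_equiv {N : Type*} [AddCommGroup N] [Module A N]
    (G : ℤ → Submodule S M) (d : Module.End S M) (G' : ℤ → Submodule A N) (d' : Module.End A N)
    (j : ℤ) (T : Module.End S M →ₛₗ[algebraMap S A] Module.End A N) (τ : A)
    (hZ : ∀ φ ∈ endZ S G d j, T φ ∈ endZ A G' d' j)
    (hT : ∀ ψ ∈ endZ A G' d' j, ∃ φ ∈ endZ S G d j, τ • T φ = τ • ψ)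
    (hB : ∀ φ, τ • T φ ∈ endB A G' d' j ↔ φ ∈ endB S G d j) :
    Nonempty (RestrictScalars S A ↥(Ideal.span {τ} • (⊤ : Submodule A (endCoh A G' d' j)))
      ≃ₗ[S] endCoh S G d j) := by
  let TZ : endZ S G d j →ₛₗ[algebraMap S A] endZ A G' d' j :=
    { toFun φ := ⟨T φ.1, hZ φ.1 φ.2⟩
      map_add' φ φ' := Subtype.ext (T.map_add φ.1 φ'.1)
      map_smul' c φ := Subtype.ext (T.map_smulₛₗ c φ.1) }
  refine nonempty_span_smul_quotient_equiv TZ _ _ τ (fun ψ => ?_) fun φ => hB φ.1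
  obtain ⟨φ, hφ, h⟩ := hT ψ.1 ψ.2
  exact ⟨⟨φ, hφ⟩, Subtype.ext h⟩

/-- If multiplication by `τ : A` factors through a linear form and some linear form takes the
value `1` at `τ`, so that `τ` generates an ideal free of rank one over `S`, then `τ` times the
cohomology of the base-changed endomorphism complex is the cohomology of the original one. -/
theorem nonempty_span_smul_endCoh_baseChange_equiv (G : ℤ → Submodule S M) (d : Module.End S M)
    (j : ℤ) {τ : A} {f g : A →ₗ[S] S} (hf : ∀ a, τ * a = f a • τ) (hg : g τ = 1) :
    Nonempty (RestrictScalars S A ↥(Ideal.span {τ} •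
      (⊤ : Submodule A (endCoh A (fun n => (G n).baseChange A) (d.baseChange A) j)))
        ≃ₗ[S] endCoh S G d j) := by
  let T : Module.End S M →ₛₗ[algebraMap S A] Module.End A (A ⊗[S] M) :=
    { toFun φ := φ.baseChange A
      map_add' φ φ' := LinearMap.baseChange_add φ φ'
      map_smul' c φ := by rw [LinearMap.baseChange_smul, algebraMap_smul] }
  refine nonempty_span_smul_endCoh_equiv G d (fun n => (G n).baseChange A) (d.baseChange A) j T τ
    (fun φ hφ => baseChange_mem_endZ hφ)
    (fun ψ hψ => ⟨endContract f ψ, endContract_mem_endZ f hψ, smul_baseChange_endContract hf ψ⟩)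
    fun φ => ⟨fun h => ?_, fun h => Submodule.smul_mem _ τ (baseChange_mem_endB h)⟩
  have := endContract_mem_endB g h
  rwa [show T φ = φ.baseChange A from rfl, endContract_smul_baseChange, hg, one_smul] at this

end Contraction

/-- Let `S` be Noetherian, `F` a bounded complex of finitely generated free `S`-modules
(realized internally as a graded free module `M = ⊕ₙ G n` with square-zero differential `d`
lowering the grading by one), `t` an indeterminate and `S_{i+1} = S[t]/(t^{i+1})`.  Then
`⟨t^i⟩·H^{i+1}(End_{S_{i+1}}(F ⊗_S S_{i+1}))` is isomorphic as an `S`-module to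
`H^{i+1}(End_S(F))`: since `S_{i+1}` is free over `S` and the ideal `(t^i)/(t^{i+1})` is
free of rank one over `S`, tensoring commutes with cohomology of the endomorphism
complex. -/
theorem stmt14 (S : Type*) [CommRing S] [IsNoetherianRing S]
    (M : Type*) [AddCommGroup M] [Module S M]
    (G : ℤ → Submodule S M)
    (hInternal : DirectSum.IsInternal fun n => G n)
    (hfree : ∀ n, Module.Free S (G n)) (hfg : ∀ n, Module.Finite S (G n))
    (hbdd : ∃ a b : ℤ, ∀ n : ℤ, (n < a ∨ b < n) → G n = ⊥)
    (d : Module.End S M) (hd2 : d * d = 0)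
    (hdlow : ∀ n, ∀ x ∈ G n, d x ∈ G (n - 1))
    (i : ℕ) (hi : 1 ≤ i) :
    Nonempty
      ((RestrictScalars S (S[X] ⧸ Ideal.span {(X : S[X]) ^ (i + 1)})
        ↥((Ideal.span {(Ideal.Quotient.mk (Ideal.span {(X : S[X]) ^ (i + 1)}) X) ^ i}) •
          (⊤ : Submodule (S[X] ⧸ Ideal.span {(X : S[X]) ^ (i + 1)})
            (endCoh (S[X] ⧸ Ideal.span {(X : S[X]) ^ (i + 1)})
              (fun n => (G n).baseChange (S[X] ⧸ Ideal.span {(X : S[X]) ^ (i + 1)}))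
              (LinearMap.baseChange (S[X] ⧸ Ideal.span {(X : S[X]) ^ (i + 1)}) d)
              ((i : ℤ) + 1)))))
        ≃ₗ[S] endCoh S G d ((i : ℤ) + 1)) := by
  set I : Ideal S[X] := Ideal.span {(X : S[X]) ^ (i + 1)}
  have coeff_eq_zero {k : ℕ} (hk : k ≤ i) :
      I.restrictScalars S ≤ LinearMap.ker (lcoeff S k) := by
    intro p hp
    obtain ⟨q, rfl⟩ := Ideal.mem_span_singleton.1 (show p ∈ I from hp)
    simp [coeff_X_pow_mul', show ¬ i + 1 ≤ k by omega]
  let c (k : ℕ) (hk : k ≤ i) : (S[X] ⧸ I) →ₗ[S] S :=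
    (I.restrictScalars S).liftQ (lcoeff S k) (coeff_eq_zero hk)
  refine nonempty_span_smul_endCoh_baseChange_equiv G d _ (f := c 0 i.zero_le) (g := c i le_rfl)
    (fun a => ?_) ?_
  · obtain ⟨p, rfl⟩ := Ideal.Quotient.mk_surjective a
    change _ = p.coeff 0 • _
    rw [← map_pow, ← map_mul, ← Ideal.Quotient.mkₐ_eq_mk S, ← map_smul,
      Ideal.Quotient.mkₐ_eq_mk, Ideal.Quotient.mk_eq_mk_iff_sub_mem, Ideal.mem_span_singleton]
    refine ⟨p.divX, ?_⟩
    conv_lhs => rw [← p.divX_mul_X_add]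
    simp only [coeff_add, mul_coeff_zero, coeff_X_zero, mul_zero, coeff_C_zero, zero_add,
      smul_eq_C_mul]
    ring
  · rw [← map_pow]
    change (X ^ i : S[X]).coeff i = 1
    simp
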